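/- Let λ, μ, ν be partitions of k with g_{λμν} ≠ 0, and assume the stretching property that g_{Nλ, Nμ, Nν} ≠ 0 for all positive integers N. Then H(λ̄) ≤ H(μ̄) + H(ν̄), where λ̄ = λ/k and H is the Shannon entropy. -/

import Mathlib

open Finset Nat

noncomputable section

/-- The cells of the Young diagram of `lam` (row and column indices below `k`). -/
def youngCells (k : ℕ) (lam : ℕ → ℕ) : Finset (ℕ × ℕ) :=
  (range k ×ˢ range k).filter fun c => c.2 < lam c.1

/-- `lam` is a partition of `k`: a weakly decreasing sequence of naturals summing to `k`
(supported on the first `k` entries). -/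
def IsPartitionOf (k : ℕ) (lam : ℕ → ℕ) : Prop :=
  Antitone lam ∧ (∀ i, k ≤ i → lam i = 0) ∧ ∑ i ∈ range k, lam i = k

/-- The Young symmetry operator `e(T)` in the group algebra `ℂ[S_k]`, for a tableau given by
a numbering `t : Fin k → ℕ × ℕ` of the boxes: the signed sum over the column group times the
sum over the row group. -/
def youngSym (k : ℕ) (t : Fin k → ℕ × ℕ) : MonoidAlgebra ℂ (Equiv.Perm (Fin k)) :=
  (∑ π ∈ univ.filter (fun π : Equiv.Perm (Fin k) => ∀ j, (t (π j)).2 = (t j).2),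
      MonoidAlgebra.single π ((Equiv.Perm.sign π : ℤ) : ℂ)) *
    ∑ π ∈ univ.filter (fun π : Equiv.Perm (Fin k) => ∀ j, (t (π j)).1 = (t j).1),
      MonoidAlgebra.single π (1 : ℂ)

/-- The left ideal `ℂ[S_k]·e(T)` generated by the Young symmetry operator of the tableau `t`;
it carries the irreducible representation `U_lam` of `S_k` for `lam` the shape of `t`. -/
def youngIdeal (k : ℕ) (t : Fin k → ℕ × ℕ) :
    Submodule ℂ (MonoidAlgebra ℂ (Equiv.Perm (Fin k))) :=
  LinearMap.range (LinearMap.mulRight ℂ (youngSym k t))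

/-- The value at `π` of the character of the representation of `S_k` on the left ideal
`ℂ[S_k]·e(T)`, i.e. the trace of left multiplication by `π` on this ideal.  For `t` a
tableau of shape `lam ⊢ k` this is the irreducible character `χ_lam(π)`. -/
def youngIdealChar (k : ℕ) (t : Fin k → ℕ × ℕ) (π : Equiv.Perm (Fin k)) : ℂ :=
  LinearMap.trace ℂ (youngIdeal k t)
    ((LinearMap.mulLeft ℂ (MonoidAlgebra.single π (1 : ℂ))).restrict
      (fun x hx => by
        obtain ⟨a, rfl⟩ := hx
        exact ⟨MonoidAlgebra.single π (1 : ℂ) * a, by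
          simp only [LinearMap.mulRight_apply, LinearMap.mulLeft_apply, mul_assoc]⟩))

/-- `chi` is the family of irreducible characters of the symmetric groups: `chi k lam` is the
character of the irreducible representation of `S_k` indexed by the partition `lam ⊢ k`,
realised on the left ideal generated by the Young symmetry operator of any tableau of
shape `lam`. -/
def IsCharacterFamily (chi : (k : ℕ) → (ℕ → ℕ) → Equiv.Perm (Fin k) → ℂ) : Prop :=
  ∀ (k : ℕ) (lam : ℕ → ℕ), IsPartitionOf k lam →
    ∀ t : Fin k → ℕ × ℕ, Set.BijOn t Set.univ ↑(youngCells k lam) →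
      ∀ π, chi k lam π = youngIdealChar k t π

/-- `g` is the family of Kronecker coefficients associated to the character family `chi`:
`g k lam mu nu` is the multiplicity of `U_lam` in `U_mu ⊗ U_nu`, given by
`(1/k!) Σ_{π ∈ S_k} χ_lam(π) χ_mu(π) χ_nu(π)`. -/
def IsKroneckerFamily (chi : (k : ℕ) → (ℕ → ℕ) → Equiv.Perm (Fin k) → ℂ)
    (g : (k : ℕ) → (ℕ → ℕ) → (ℕ → ℕ) → (ℕ → ℕ) → ℕ) : Prop :=
  ∀ (k : ℕ) (lam mu nu : ℕ → ℕ), IsPartitionOf k lam → IsPartitionOf k mu →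
    IsPartitionOf k nu →
      (g k lam mu nu : ℂ) = (k ! : ℂ)⁻¹ * ∑ π : Equiv.Perm (Fin k),
        chi k lam π * chi k mu π * chi k nu π


/-- The signed column sum. -/
def colSum (k : ℕ) (t : Fin k → ℕ × ℕ) : MonoidAlgebra ℂ (Equiv.Perm (Fin k)) :=
  ∑ π ∈ univ.filter (fun π : Equiv.Perm (Fin k) => ∀ j, (t (π j)).2 = (t j).2),
      MonoidAlgebra.single π ((Equiv.Perm.sign π : ℤ) : ℂ)

/-- The row sum. -/
def rowSum (k : ℕ) (t : Fin k → ℕ × ℕ) : MonoidAlgebra ℂ (Equiv.Perm (Fin k)) :=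
  ∑ π ∈ univ.filter (fun π : Equiv.Perm (Fin k) => ∀ j, (t (π j)).1 = (t j).1),
      MonoidAlgebra.single π (1 : ℂ)

theorem colSum_coeff (k : ℕ) (t : Fin k → ℕ × ℕ) (σ : Equiv.Perm (Fin k)) :
    (colSum k t).coeff σ =
      if ∀ j, (t (σ j)).2 = (t j).2 then ((Equiv.Perm.sign σ : ℤ) : ℂ) else 0 := by
  classical
  simp [colSum, MonoidAlgebra.coeff_sum, Finsupp.finsetSum_apply, MonoidAlgebra.coeff_single,
    Finsupp.single_apply]

theorem rowSum_coeff (k : ℕ) (t : Fin k → ℕ × ℕ) (σ : Equiv.Perm (Fin k)) :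
    (rowSum k t).coeff σ = if ∀ j, (t (σ j)).1 = (t j).1 then (1 : ℂ) else 0 := by
  classical
  simp [rowSum, MonoidAlgebra.coeff_sum, Finsupp.finsetSum_apply, MonoidAlgebra.coeff_single,
    Finsupp.single_apply]

/-- Translates of the coefficient function of `X`. -/
def transSpan (k : ℕ) (X : MonoidAlgebra ℂ (Equiv.Perm (Fin k))) :
    Submodule ℂ (Equiv.Perm (Fin k) → ℂ) :=
  Submodule.span ℂ (Set.range fun p : Equiv.Perm (Fin k) × Equiv.Perm (Fin k) =>
    fun π => X.coeff (p.1⁻¹ * (π⁻¹ * p.2)))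

theorem mem_transSpan (k : ℕ) (X a : MonoidAlgebra ℂ (Equiv.Perm (Fin k)))
    (ψ : MonoidAlgebra ℂ (Equiv.Perm (Fin k)) →ₗ[ℂ] ℂ) :
    (fun π => ψ (MonoidAlgebra.single π 1 * (a * X))) ∈ transSpan k X := by
  classical
  have hψ : ∀ v, ψ v = ∑ α, ψ (MonoidAlgebra.single α 1) * v.coeff α := by
    intro v
    induction v using MonoidAlgebra.induction_linear with
    | zero => simp
    | add f g hf hg => simp [hf, hg, mul_add, Finset.sum_add_distrib]
    | single m r =>
      have : (MonoidAlgebra.single m r : MonoidAlgebra ℂ (Equiv.Perm (Fin k)))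
          = r • MonoidAlgebra.single m 1 := by simp
      rw [this, map_smul]
      simp [Finsupp.single_apply, mul_comm]
  induction a using MonoidAlgebra.induction_linear with
  | zero => simp only [zero_mul, mul_zero, map_zero]; exact Submodule.zero_mem _
  | add f g hf hg =>
    have := Submodule.add_mem _ hf hg
    convert this using 1
    ext π; simp [add_mul, mul_add]
  | single τ r =>
    have : (fun π => ψ (MonoidAlgebra.single π 1 * (MonoidAlgebra.single τ r * X)))
      = ∑ α, (ψ (MonoidAlgebra.single α 1) * r) • (fun π : Equiv.Perm (Fin k) => 
          X.coeff (τ⁻¹ * (π⁻¹ * α))) := by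
      ext π
      rw [hψ]
      simp [Finset.sum_apply, mul_assoc]
    rw [this]
    refine Submodule.sum_mem _ fun α _ => Submodule.smul_mem _ _ (Submodule.subset_span ⟨(τ, α), rfl⟩)

theorem char_mem (k : ℕ) (t : Fin k → ℕ × ℕ) :
    youngIdealChar k t ∈ transSpan k (colSum k t) ∧
    youngIdealChar k t ∈ transSpan k (rowSum k t) := by
  classical
  let b := Module.finBasis ℂ (youngIdeal k t)
  have hext : ∀ i, ∃ ψ : MonoidAlgebra ℂ (Equiv.Perm (Fin k)) →ₗ[ℂ] ℂ,
      ψ ∘ₗ (youngIdeal k t).subtype = b.coord i := fun i => LinearMap.exists_extend _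
  choose ψ hψ using hext
  have ha : ∀ i, ∃ a, a * (colSum k t * rowSum k t) = (b i : MonoidAlgebra ℂ (Equiv.Perm (Fin k))) :=
    fun i => (b i).2
  choose a ha using ha
  have key : youngIdealChar k t = ∑ i, fun π =>
      ψ i (MonoidAlgebra.single π 1 * (a i * (colSum k t * rowSum k t))) := by
    ext π
    rw [youngIdealChar, LinearMap.trace_eq_matrix_trace ℂ b, Matrix.trace, Finset.sum_apply]
    refine Finset.sum_congr rfl fun i _ => ?_
    rw [Matrix.diag_apply, LinearMap.toMatrix_apply, ← Module.Basis.coord_apply, ← hψ i, ha i]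
    rfl
  rw [key]
  constructor
  · refine Submodule.sum_mem _ fun i _ => ?_
    have := mem_transSpan k (colSum k t) (a i) (ψ i ∘ₗ LinearMap.mulRight ℂ (rowSum k t))
    simpa [mul_assoc] using this
  · refine Submodule.sum_mem _ fun i _ => ?_
    have := mem_transSpan k (rowSum k t) (a i * colSum k t) (ψ i)
    simpa [mul_assoc] using this

theorem exists_trans_ne (k : ℕ) (X Y Z : MonoidAlgebra ℂ (Equiv.Perm (Fin k)))
    (f g h : Equiv.Perm (Fin k) → ℂ) (hf : f ∈ transSpan k X) (hg : g ∈ transSpan k Y)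
    (hh : h ∈ transSpan k Z) (hne : ∑ π, f π * g π * h π ≠ 0) :
    ∃ p q r : Equiv.Perm (Fin k) × Equiv.Perm (Fin k),
      ∑ π : Equiv.Perm (Fin k), X.coeff (p.1⁻¹ * (π⁻¹ * p.2)) * Y.coeff (q.1⁻¹ * (π⁻¹ * q.2)) *
        Z.coeff (r.1⁻¹ * (π⁻¹ * r.2)) ≠ 0 := by
  by_contra! hcon
  apply hne
  unfold transSpan at hf hg hh
  induction hf using Submodule.span_induction with
  | zero => simp
  | add x y _ _ hx hy =>
    by_cases h1 : ∑ π, x π * g π * h π = 0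
    · by_cases h2 : ∑ π, y π * g π * h π = 0
      · simp [add_mul, Finset.sum_add_distrib, h1, h2]
      · exact absurd (hy h2) h2
    · exact absurd (hx h1) h1
  | smul c x _ hx =>
    by_cases h1 : ∑ π, x π * g π * h π = 0
    · simp [mul_assoc, ← Finset.mul_sum] at h1 ⊢; simp [h1]
    · exact absurd (hx h1) h1
  | mem x hx =>
    obtain ⟨p, rfl⟩ := hx
    clear hne
    induction hg using Submodule.span_induction with
    | zero => simp
    | add x y _ _ hx hy =>
      simp only [Pi.add_apply, mul_add, add_mul, Finset.sum_add_distrib, hx, hy, add_zero]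
    | smul c x _ hx =>
      have := congrArg (c * ·) hx
      simp only [Finset.mul_sum, mul_zero] at this
      rw [← this]
      refine Finset.sum_congr rfl fun π _ => ?_
      simp only [Pi.smul_apply, smul_eq_mul]; ring
    | mem x hx =>
      obtain ⟨q, rfl⟩ := hx
      induction hh using Submodule.span_induction with
      | zero => simp
      | add x y _ _ hx hy =>
        simp only [Pi.add_apply, mul_add, Finset.sum_add_distrib, hx, hy, add_zero]
      | smul c x _ hx =>
        have := congrArg (c * ·) hx
        simp only [Finset.mul_sum, mul_zero] at this
        rw [← this]
        refine Finset.sum_congr rfl fun π _ => ?_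
        simp only [Pi.smul_apply, smul_eq_mul]; ring
      | mem x hx =>
        obtain ⟨r, rfl⟩ := hx
        exact hcon p q r

/-- From a nonzero Kronecker sum we obtain two rearranged row words which are jointly injective
on the columns of the first tableau. -/
theorem exists_words (k : ℕ) (t u v : Fin k → ℕ × ℕ)
    (hne : ∑ π, youngIdealChar k t π * youngIdealChar k u π * youngIdealChar k v π ≠ 0) :
    ∃ x y : Equiv.Perm (Fin k), ∀ i j, (t i).2 = (t j).2 →
      (u (x i)).1 = (u (x j)).1 → (v (y i)).1 = (v (y j)).1 → i = j := by
  classical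
  obtain ⟨p, q, r, h⟩ := exists_trans_ne k _ _ _ _ _ _ (char_mem k t).1 (char_mem k u).2
    (char_mem k v).2 hne
  refine ⟨q.2⁻¹ * p.2, r.2⁻¹ * p.2, fun i j hij hu hv => ?_⟩
  by_contra hne'
  apply h
  have hs : ∀ {β : Type} (f : Fin k → β), f i = f j → ∀ l, f (Equiv.swap i j l) = f l := by
    intro β f hf l
    by_cases h1 : l = i
    · subst h1; simp [hf]
    · by_cases h2 : l = j
      · subst h2; simp [hf]
      · rw [Equiv.swap_apply_of_ne_of_ne h1 h2]
  -- the involution in terms of the inverse permutation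
  let s : Equiv.Perm (Fin k) := p.2 * Equiv.swap i j * p.2⁻¹
  have hss : s * s = 1 := by
    simp only [s]
    ext l; simp
  have hsinv : s⁻¹ = s := inv_eq_of_mul_eq_one_left hss
  have hc : ∀ σ : Equiv.Perm (Fin k), (colSum k t).coeff (σ * Equiv.swap i j) =
      - (colSum k t).coeff σ := by
    intro σ
    rw [colSum_coeff, colSum_coeff]
    have hiff : (∀ l, (t ((σ * Equiv.swap i j) l)).2 = (t l).2) ↔ ∀ l, (t (σ l)).2 = (t l).2 := by
      have e := hs (fun l => (t l).2) hij
      constructor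
      · intro H l
        have := H (Equiv.swap i j l)
        simp only [Equiv.Perm.mul_apply, Equiv.swap_apply_self] at this
        rw [this]; exact e l
      · intro H l
        rw [Equiv.Perm.mul_apply, H]; exact e l
    rw [if_congr hiff rfl rfl]
    split_ifs
    · simp [Equiv.Perm.sign_mul, Equiv.Perm.sign_swap hne']
    · simp
  have hr : ∀ (w : Fin k → ℕ × ℕ) (z : Equiv.Perm (Fin k)) (a b : Equiv.Perm (Fin k)),
      (w ((z⁻¹ * p.2) i)).1 = (w ((z⁻¹ * p.2) j)).1 →
      (rowSum k w).coeff (a * (b * s * z)) = (rowSum k w).coeff (a * (b * z)) := by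
    intro w z a b hw
    rw [rowSum_coeff, rowSum_coeff]
    refine if_congr ?_ rfl rfl
    have hai : ∀ (σ : Equiv.Perm (Fin k)) m, σ (σ⁻¹ m) = m := fun σ m => by simp
    have e := hs (fun l => (w ((z⁻¹ * p.2) l)).1) hw
    constructor
    · intro H l
      have := H (z⁻¹ (s (z l)))
      have h2 := e (p.2⁻¹ (z l))
      have hs2 : ∀ m, s (s m) = m := fun m => by
        rw [← Equiv.Perm.mul_apply, hss]; rfl
      simp only [Equiv.Perm.mul_apply, hai, hs2] at this h2 ⊢
      rw [this]
      have h3 : z⁻¹ (z l) = l := by simp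
      rw [h3] at h2
      rw [← h2]
      simp [s]
    · intro H l
      have := H (z⁻¹ (s (z l)))
      have h2 := e (p.2⁻¹ (z l))
      simp only [Equiv.Perm.mul_apply, hai] at this h2 ⊢
      rw [this]
      have h3 : z⁻¹ (z l) = l := by simp
      rw [h3] at h2
      rw [← h2]
      simp [s]
  have hneg : ∀ S : ℂ, S = -S → S = 0 := fun S hS => by
    have : (2 : ℂ) * S = 0 := by linear_combination hS
    simpa using this
  apply hneg
  rw [← Finset.sum_neg_distrib]
  refine Fintype.sum_equiv (Equiv.mulLeft s) _ _ fun π => ?_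
  simp only [Equiv.coe_mulLeft, mul_inv_rev, hsinv]
  rw [hr u q.2 _ _ hu, hr v r.2 _ _ hv]
  have : p.1⁻¹ * (π⁻¹ * s * p.2) = p.1⁻¹ * (π⁻¹ * p.2) * Equiv.swap i j := by
    simp [s, mul_assoc]
  rw [this, hc]
  ring

theorem sum_antitone_le (L : ℕ → ℝ) (hL : Antitone L) (S : Finset ℕ) :
    ∑ i ∈ S, L i ≤ ∑ i ∈ range S.card, L i := by
  induction S using Finset.induction_on_max with
  | empty => simp
  | insert a s hs ih =>
    have ha : a ∉ s := fun h => lt_irrefl _ (hs a h)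
    rw [Finset.sum_insert ha, Finset.card_insert_of_notMem ha, Finset.sum_range_succ]
    have hc : s.card ≤ a := by
      have : s ⊆ range a := fun b hb => Finset.mem_range.2 (hs b hb)
      simpa using Finset.card_le_card this
    have := hL hc
    linarith

theorem exists_sorting {α : Type} (S : Finset α) (hS : S.Nonempty) (f : α → ℝ) :
    ∃ (ρ : α → ℕ) (e : ℕ → α), (∀ a ∈ S, ρ a < S.card ∧ e (ρ a) = a) ∧
      (∀ i < S.card, e i ∈ S ∧ ρ (e i) = i) ∧ Antitone fun i => f (e i) := by
  classical
  have hpos : 0 < S.card := hS.card_pos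
  let E := S.equivFin
  let g : Fin S.card → ℝ := fun i => - f (E.symm i)
  let σ := Tuple.sort g
  have hmono : Monotone (g ∘ σ) := Tuple.monotone_sort g
  let mi : ℕ → Fin S.card := fun i => ⟨min i (S.card - 1), by omega⟩
  have hmi : ∀ i (h : i < S.card), mi i = ⟨i, h⟩ := by
    intro i h; simp only [mi, Fin.mk.injEq]; omega
  refine ⟨fun a => if h : a ∈ S then (σ.symm (E ⟨a, h⟩) : ℕ) else 0,
    fun i => (E.symm (σ (mi i)) : α), ?_, ?_, ?_⟩
  · intro a ha
    simp only [ha, dite_true]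
    refine ⟨Fin.is_lt _, ?_⟩
    rw [hmi _ (Fin.is_lt _)]
    simp
  · intro i hi
    refine ⟨(E.symm (σ (mi i))).2, ?_⟩
    simp [hmi i hi]
  · intro i j hij
    have : mi i ≤ mi j := by
      simp only [mi, Fin.mk_le_mk]; omega
    have := hmono this
    simp only [g, Function.comp] at this
    simpa using this

theorem part_le {k : ℕ} {lam : ℕ → ℕ} (h : IsPartitionOf k lam) (i : ℕ) : lam i ≤ k := by
  by_cases hi : i < k
  · calc lam i ≤ ∑ i ∈ range k, lam i :=
        Finset.single_le_sum (f := lam) (fun _ _ => Nat.zero_le _) (Finset.mem_range.2 hi)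
      _ = k := h.2.2
  · rw [h.2.1 i (by omega)]; omega

theorem sum_cells {M : Type} [AddCommMonoid M] {k : ℕ} {lam : ℕ → ℕ} (h : IsPartitionOf k lam)
    (F : ℕ → M) : ∑ c ∈ youngCells k lam, F c.1 = ∑ i ∈ range k, lam i • F i := by
  rw [youngCells, Finset.sum_filter, Finset.sum_product]
  refine Finset.sum_congr rfl fun i _ => ?_
  simp only
  rw [← Finset.sum_filter, Finset.sum_const]
  congr 1
  have : (range k).filter (fun j => j < lam i) = range (lam i) := by
    ext j; have := part_le h i; simp; omega
  rw [this, Finset.card_range]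

theorem exists_tableau {k : ℕ} {lam : ℕ → ℕ} (h : IsPartitionOf k lam) :
    ∃ t : Fin k → ℕ × ℕ, Set.BijOn t Set.univ ↑(youngCells k lam) := by
  have hcard : (youngCells k lam).card = k := by
    have := sum_cells h (fun _ => 1)
    simpa [h.2.2] using this
  let E := (youngCells k lam).equivFinOfCardEq hcard
  refine ⟨fun i => (E.symm i : ℕ × ℕ), fun i _ => (E.symm i).2, ?_, ?_⟩
  · intro i _ j _ hij
    exact E.symm.injective (Subtype.ext hij)
  · intro c hc
    exact ⟨E ⟨c, hc⟩, trivial, by simp⟩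

theorem sum_tableau {M : Type} [AddCommMonoid M] {k : ℕ} {lam : ℕ → ℕ} {t : Fin k → ℕ × ℕ}
    (ht : Set.BijOn t Set.univ ↑(youngCells k lam)) (G : ℕ × ℕ → M) :
    ∑ j, G (t j) = ∑ c ∈ youngCells k lam, G c := by
  refine Finset.sum_nbij t ?_ ?_ ?_ ?_
  · intro a _; exact ht.1 trivial
  · simpa using ht.2.1
  · simpa using ht.2.2
  · intros; rfl

theorem entropy_ineq {k : ℕ} (hk : 0 < k) (lam mu nu : ℕ → ℕ)
    (hlam : IsPartitionOf k lam) (hmu : IsPartitionOf k mu) (hnu : IsPartitionOf k nu)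
    (t u v : Fin k → ℕ × ℕ)
    (ht : Set.BijOn t Set.univ ↑(youngCells k lam))
    (hu : Set.BijOn u Set.univ ↑(youngCells k mu))
    (hv : Set.BijOn v Set.univ ↑(youngCells k nu))
    (x y : Equiv.Perm (Fin k))
    (hinj : ∀ i j, (t i).2 = (t j).2 →
      (u (x i)).1 = (u (x j)).1 → (v (y i)).1 = (v (y j)).1 → i = j) :
    ∑ i ∈ range k, (mu i : ℝ) * Real.log ((mu i : ℝ) / k) +
      ∑ i ∈ range k, (nu i : ℝ) * Real.log ((nu i : ℝ) / k) ≤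
    ∑ i ∈ range k, (lam i : ℝ) * Real.log ((lam i : ℝ) / k) := by
  classical
  have hk' : (0 : ℝ) < k := by exact_mod_cast hk
  let q : ℕ × ℕ → ℝ := fun c => (mu c.1 / k : ℝ) * (nu c.2 / k : ℝ)
  let w : Fin k → ℕ × ℕ := fun j => ((u (x j)).1, (v (y j)).1)
  let S : Finset (ℕ × ℕ) := (range k ×ˢ range k).filter fun c => 0 < q c
  have hcell : ∀ {l : ℕ → ℕ} {s : Fin k → ℕ × ℕ}, Set.BijOn s Set.univ ↑(youngCells k l) →
      ∀ j, (s j).1 < k ∧ (s j).2 < k ∧ (s j).2 < l (s j).1 := by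
    intro l s hs j
    have := hs.1 (Set.mem_univ j)
    simp only [youngCells, Finset.coe_filter, Finset.mem_product, Finset.mem_range,
      Set.mem_ofPred_eq] at this
    tauto
  have hwmu : ∀ j, (0 : ℝ) < mu (w j).1 / k := fun j => by
    have := (hcell hu (x j)).2.2
    have : (0 : ℝ) < mu (u (x j)).1 := by exact_mod_cast (by omega)
    exact div_pos this hk'
  have hwnu : ∀ j, (0 : ℝ) < nu (w j).2 / k := fun j => by
    have := (hcell hv (y j)).2.2
    have : (0 : ℝ) < nu (v (y j)).1 := by exact_mod_cast (by omega)
    exact div_pos this hk'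
  have hwS : ∀ j, w j ∈ S := fun j => by
    simp only [S, Finset.mem_filter, Finset.mem_product, Finset.mem_range]
    exact ⟨⟨(hcell hu (x j)).1, (hcell hv (y j)).1⟩, mul_pos (hwmu j) (hwnu j)⟩
  have hSne : S.Nonempty := ⟨_, hwS ⟨0, hk⟩⟩
  obtain ⟨ρ, e, hρ, he, hanti⟩ := exists_sorting S hSne (fun c => if c ∈ S then Real.log (q c) else 0)
  -- step 1: the left side is the sum of logs over the word
  have h1 : ∑ j, Real.log (q (w j)) = ∑ i ∈ range k, (mu i : ℝ) * Real.log ((mu i : ℝ) / k) +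
      ∑ i ∈ range k, (nu i : ℝ) * Real.log ((nu i : ℝ) / k) := by
    have : ∀ j, Real.log (q (w j)) = Real.log (mu (w j).1 / k) + Real.log (nu (w j).2 / k) :=
      fun j => Real.log_mul (hwmu j).ne' (hwnu j).ne'
    simp only [this, Finset.sum_add_distrib]
    congr 1
    · rw [show (∑ j, Real.log (mu (w j).1 / k)) = ∑ j, Real.log ((mu (u j).1 : ℝ) / k) from
        Equiv.sum_comp x (fun j => Real.log ((mu (u j).1 : ℝ) / k)),
        sum_tableau hu (fun c => Real.log ((mu c.1 : ℝ) / k)),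
        sum_cells hmu (fun i => Real.log ((mu i : ℝ) / k))]
      simp
    · rw [show (∑ j, Real.log (nu (w j).2 / k)) = ∑ j, Real.log ((nu (v j).1 : ℝ) / k) from
        Equiv.sum_comp y (fun j => Real.log ((nu (v j).1 : ℝ) / k)),
        sum_tableau hv (fun c => Real.log ((nu c.1 : ℝ) / k)),
        sum_cells hnu (fun i => Real.log ((nu i : ℝ) / k))]
      simp
  set L : ℕ → ℝ := fun i => if e i ∈ S then Real.log (q (e i)) else 0 with hL
  have hLw : ∀ j, Real.log (q (w j)) = L (ρ (w j)) := fun j => by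
    simp only [hL, (hρ _ (hwS j)).2, hwS j, if_true]
  -- columns
  have hrinj : ∀ c, Set.InjOn (fun j => ρ (w j))
      ((univ.filter fun j : Fin k => (t j).2 = c : Finset (Fin k)) : Set (Fin k)) := by
    intro c i hi j hj hij
    simp only [Finset.coe_filter, Finset.mem_univ, true_and, Set.mem_ofPred_eq] at hi hj
    have hw : w i = w j := by
      rw [← (hρ _ (hwS i)).2, ← (hρ _ (hwS j)).2]
      exact congrArg e hij
    exact hinj i j (hi.trans hj.symm) (Prod.ext_iff.1 hw).1 (Prod.ext_iff.1 hw).2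
  have hcol : ∀ c < k, (univ.filter fun j : Fin k => (t j).2 = c).card =
      ((range k).filter fun i => c < lam i).card := by
    intro c hc
    refine Finset.card_nbij (fun j => (t j).1) ?_ ?_ ?_
    · intro j hj
      simp only [Finset.coe_filter, Finset.mem_filter, Finset.mem_univ, true_and, Finset.mem_range, Set.mem_ofPred_eq] at hj ⊢
      have := hcell ht j
      exact ⟨this.1, hj ▸ this.2.2⟩
    · intro i hi j hj hij
      simp only [Finset.coe_filter, Finset.mem_univ, true_and, Set.mem_ofPred_eq] at hi hj
      exact ht.2.1 trivial trivial (Prod.ext hij (hi.trans hj.symm))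
    · intro i hi
      simp only [Finset.coe_filter, Finset.mem_range, Set.mem_ofPred_eq] at hi
      obtain ⟨j, _, hj⟩ := ht.2.2 (show (i, c) ∈ (↑(youngCells k lam) : Set (ℕ × ℕ)) by
        simp [youngCells, hi, hc])
      exact ⟨j, by simp [hj], by simp [hj]⟩
  have hrange : ∀ c, range ((range k).filter fun i => c < lam i).card =
      (range k).filter fun i => c < lam i := by
    intro c
    set A := (range k).filter fun i => c < lam i with hA
    have hdown : ∀ i ∈ A, ∀ j ≤ i, j ∈ A := by
      intro i hi j hj
      simp only [hA, Finset.mem_filter, Finset.mem_range] at hi ⊢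
      exact ⟨by omega, lt_of_lt_of_le hi.2 (hlam.1 hj)⟩
    symm
    apply Finset.eq_of_subset_of_card_le
    · intro i hi
      have : range (i + 1) ⊆ A := fun j hj => hdown i hi j (by simp at hj; omega)
      have := Finset.card_le_card this
      simp only [Finset.card_range] at this
      simp; omega
    · simp
  have h2 : ∑ j, Real.log (q (w j)) ≤ ∑ i ∈ range k, (lam i : ℝ) * L i := by
    calc ∑ j, Real.log (q (w j)) = ∑ j, L (ρ (w j)) := Finset.sum_congr rfl fun j _ => hLw j
      _ = ∑ c ∈ range k, ∑ j ∈ univ.filter (fun j : Fin k => (t j).2 = c), L (ρ (w j)) :=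
          (Finset.sum_fiberwise_of_maps_to
            (fun j _ => Finset.mem_range.2 (hcell ht j).2.1) _).symm
      _ ≤ ∑ c ∈ range k, ∑ i ∈ (range k).filter (fun i => c < lam i), L i := by
          refine Finset.sum_le_sum fun c hc => ?_
          rw [← Finset.sum_image (f := L) (hrinj c), ← hrange c, ← hcol c (Finset.mem_range.1 hc),
            ← Finset.card_image_of_injOn (hrinj c)]
          exact sum_antitone_le L hanti _
      _ = ∑ i ∈ range k, (lam i : ℝ) * L i := by
          simp only [Finset.sum_filter]
          rw [Finset.sum_comm]
          refine Finset.sum_congr rfl fun i _ => ?_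
          rw [← Finset.sum_filter, Finset.sum_const]
          have : (range k).filter (fun j => j < lam i) = range (lam i) := by
            ext j; have := part_le hlam i; simp; omega
          rw [this, Finset.card_range, nsmul_eq_mul]
  have hlt : ∀ i, 0 < lam i → i < S.card := by
    intro i hi
    have hik : i < k := by
      by_contra hcon
      rw [hlam.2.1 i (by omega)] at hi; omega
    have : i ∈ range ((range k).filter fun i => 0 < lam i).card := by
      rw [hrange 0]; simp [hi, hik]
    rw [← hcol 0 hk, ← Finset.card_image_of_injOn (hrinj 0), Finset.mem_range] at this
    refine this.trans_le ?_
    have hsub : Finset.image (fun j => ρ (w j)) (univ.filter fun j : Fin k => (t j).2 = 0)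
        ⊆ range S.card := by
      intro a ha
      obtain ⟨j, _, rfl⟩ := Finset.mem_image.1 ha
      exact Finset.mem_range.2 (hρ _ (hwS j)).1
    simpa using Finset.card_le_card hsub
  have hqnn : ∀ c, 0 ≤ q c := fun c => by positivity
  let Q : ℕ → ℝ := fun i => if i < S.card then q (e i) else 0
  have hQnn : ∀ i, 0 ≤ Q i := fun i => by
    simp only [Q]; split_ifs
    · exact hqnn _
    · exact le_rfl
  have h3 : ∀ i ∈ range k, (lam i : ℝ) * L i - (lam i : ℝ) * Real.log ((lam i : ℝ) / k)
      ≤ k * Q i - lam i := by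
    intro i _
    rcases Nat.eq_zero_or_pos (lam i) with h0 | hpos
    · simp only [h0, Nat.cast_zero, zero_mul, sub_zero]
      exact mul_nonneg hk'.le (hQnn i)
    · have hi := hlt i hpos
      have hl : (0 : ℝ) < lam i := by exact_mod_cast hpos
      have heS := (he i hi).1
      have hq : 0 < q (e i) := (Finset.mem_filter.1 heS).2
      have hLi : L i = Real.log (q (e i)) := by simp only [hL, heS, if_true]
      have hQi : Q i = q (e i) := by simp only [Q, hi, if_true]
      rw [hLi, hQi, ← mul_sub, ← Real.log_div hq.ne' (div_pos hl hk').ne']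
      have := Real.log_le_sub_one_of_pos (div_pos hq (div_pos hl hk'))
      calc (lam i : ℝ) * Real.log (q (e i) / (lam i / k))
          ≤ lam i * (q (e i) / (lam i / k) - 1) := mul_le_mul_of_nonneg_left this hl.le
        _ = k * q (e i) - lam i := by field_simp
  have hQsum : ∑ i ∈ range k, Q i ≤ 1 := by
    have hs1 : ∀ {l : ℕ → ℕ}, IsPartitionOf k l → ∑ i ∈ range k, (l i / k : ℝ) = 1 := by
      intro l hl
      rw [← Finset.sum_div, ← Nat.cast_sum, hl.2.2, div_self hk'.ne']
    calc ∑ i ∈ range k, Q i = ∑ i ∈ (range k).filter (fun i => i < S.card), q (e i) := by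
          rw [Finset.sum_filter]
      _ ≤ ∑ i ∈ range S.card, q (e i) := by
          refine Finset.sum_le_sum_of_subset_of_nonneg ?_ fun _ _ _ => hqnn _
          intro i hi
          simp only [Finset.mem_filter] at hi
          exact Finset.mem_range.2 hi.2
      _ = ∑ c ∈ S, q c := by
          refine Finset.sum_bij' (fun i _ => e i) (fun c _ => ρ c) ?_ ?_ ?_ ?_ ?_
          · intro i hi; exact (he i (Finset.mem_range.1 hi)).1
          · intro c hc; exact Finset.mem_range.2 (hρ c hc).1
          · intro i hi; exact (he i (Finset.mem_range.1 hi)).2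
          · intro c hc; exact (hρ c hc).2
          · intros; rfl
      _ ≤ ∑ c ∈ range k ×ˢ range k, q c :=
          Finset.sum_le_sum_of_subset_of_nonneg (Finset.filter_subset _ _) fun _ _ _ => hqnn _
      _ = 1 := by
          rw [Finset.sum_product]
          simp only [q]
          rw [← Finset.sum_mul_sum, hs1 hmu, hs1 hnu, one_mul]
  have h4 := Finset.sum_le_sum h3
  rw [Finset.sum_sub_distrib, Finset.sum_sub_distrib, ← Finset.mul_sum, ← Nat.cast_sum,
    hlam.2.2] at h4
  have h5 : (k : ℝ) * ∑ i ∈ range k, Q i ≤ k * 1 := mul_le_mul_of_nonneg_left hQsum hk'.le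
  linarith

/-- If `g_{lam mu nu} ≠ 0` for partitions `lam, mu, nu ⊢ k` and (stretching property) the
Kronecker coefficients `g_{N·lam, N·mu, N·nu}` are non-zero for all positive integers `N`,
then `H(lam/k) ≤ H(mu/k) + H(nu/k)` for the Shannon entropy `H`. -/
theorem stmt_17 {k : ℕ} (hk : 0 < k)
    (chi : (k : ℕ) → (ℕ → ℕ) → Equiv.Perm (Fin k) → ℂ) (hchi : IsCharacterFamily chi)
    (g : (k : ℕ) → (ℕ → ℕ) → (ℕ → ℕ) → (ℕ → ℕ) → ℕ) (hg : IsKroneckerFamily chi g)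
    (lam mu nu : ℕ → ℕ)
    (hlam : IsPartitionOf k lam) (hmu : IsPartitionOf k mu) (hnu : IsPartitionOf k nu)
    (hg0 : g k lam mu nu ≠ 0)
    (hstretch : ∀ N : ℕ, 0 < N →
      g (N * k) (fun i => N * lam i) (fun i => N * mu i) (fun i => N * nu i) ≠ 0) :
    -(∑ i ∈ Finset.range k, ((lam i : ℝ) / k) * Real.log ((lam i : ℝ) / k)) ≤
      -(∑ i ∈ Finset.range k, ((mu i : ℝ) / k) * Real.log ((mu i : ℝ) / k)) +
        -(∑ i ∈ Finset.range k, ((nu i : ℝ) / k) * Real.log ((nu i : ℝ) / k)) := by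
  obtain ⟨t, ht⟩ := exists_tableau hlam
  obtain ⟨u, hu⟩ := exists_tableau hmu
  obtain ⟨v, hv⟩ := exists_tableau hnu
  have hne : ∑ π, youngIdealChar k t π * youngIdealChar k u π * youngIdealChar k v π ≠ 0 := by
    intro h0
    have := hg k lam mu nu hlam hmu hnu
    simp only [hchi k lam hlam t ht, hchi k mu hmu u hu, hchi k nu hnu v hv, h0, mul_zero] at this
    exact hg0 (by exact_mod_cast this)
  obtain ⟨x, y, hxy⟩ := exists_words k t u v hne
  have key := entropy_ineq hk lam mu nu hlam hmu hnu t u v ht hu hv x y hxy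
  have hk' : (0 : ℝ) < k := by exact_mod_cast hk
  have hdiv : ∀ l : ℕ → ℕ, ∑ i ∈ Finset.range k, ((l i : ℝ) / k) * Real.log ((l i : ℝ) / k) =
      (∑ i ∈ range k, (l i : ℝ) * Real.log ((l i : ℝ) / k)) / k := by
    intro l
    rw [Finset.sum_div]
    exact Finset.sum_congr rfl fun i _ => by ring
  rw [hdiv, hdiv, hdiv]
  have := div_le_div_of_nonneg_right key hk'.le
  rw [add_div] at this
  linarith

end
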